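/- The algebra M with products [·,·] and ⟨·,·,·⟩ satisfies the following 31-term identity: for all a, b, c, d, e ∈ M, −[[[[a,b],e],d],c] − [[[[a,c],b],d],e] − [[[[a,c],e],d],b] + [[[[a,d],c],b],e] + [[[[a,e],d],b],c] + [[[[a,e],d],c],b] + [[[[b,c],d],a],e] − [[[[b,d],a],c],e] − [[[[b,d],a],e],c] − [[[[c,d],a],e],b] − [[[[d,e],b],a],c] − [[[[d,e],c],a],b] − [[⟨a,c,d⟩,b],e] − [[⟨a,c,d⟩,e],b] − [[⟨a,d,c⟩,e],b] + [[⟨b,c,d⟩,e],a] − [[⟨b,d,c⟩,a],e] − [[⟨c,e,d⟩,a],b] − [[⟨d,e,c⟩,a],b] − [[⟨d,e,c⟩,b],a] + [[[a,b],[c,d]],e] + [[[a,d],[b,e]],c] + [[[a,d],[c,e]],b] + [⟨a,d,c⟩,[b,e]] − [⟨b,c,d⟩,[a,e]] − [⟨b,d,c⟩,[a,e]] − [⟨c,e,d⟩,[a,b]] + ⟨[[a,b],e],c,d⟩ + ⟨[[a,e],b],c,d⟩ + ⟨[[a,e],b],d,c⟩ + ⟨[[b,e],a],d,c⟩ = 0.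 -/

import Mathlib

/-!
The left-hand side `Phi a b c d e` of the identity is 5-linear, and it is `sl(2)`-equivariant because
`E` and `F` act as derivations of both products (`Em_Phi`, `Fm_Phi`). Equivariance removes two of the
five variables. Since `v₆` generates `M` under `F`, the vanishing of `Phi v₆ b c d e` for all
`b, c, d, e` gives the vanishing of `Phi` (`induction_F`). Since `E v₆ = 0` and `v₋₆` generates `M`
under `E`, the case `a = v₆` follows in turn from the case `a = v₆`, `b = v₋₆` (`Phi_vHigh`).
What remains, `Phi v₆ v₋₆ c d e = 0`, is a trilinear polynomial identity in the coordinates of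
`c, d, e`, checked directly in `Phi_vHigh_vLow`.
-/

noncomputable section

/-- The 7-dimensional complex vector space `M` with basis
`v₆, v₄, v₂, v₀, v₋₂, v₋₄, v₋₆` (coordinates indexed by `Fin 7` in this order). -/
abbrev M7 : Type := Fin 7 → ℂ

/-- The 2×2 minor `x_p y_q - x_q y_p`. -/
def dd (x y : M7) (p q : Fin 7) : ℂ := x p * y q - x q * y p

/-- The anticommutative bilinear product `[·,·]` on `M` determined by
`[v₆,v₀] = 20v₆`, `[v₆,v₋₂] = 10v₄`, `[v₆,v₋₄] = 4v₂`, `[v₆,v₋₆] = v₀`,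
`[v₄,v₂] = −60v₆`, `[v₄,v₀] = −20v₄`, `[v₄,v₋₄] = 6v₀`, `[v₄,v₋₆] = 4v₋₂`,
`[v₂,v₀] = −20v₂`, `[v₂,v₋₂] = −15v₀`, `[v₂,v₋₆] = 10v₋₄`,
`[v₀,v₋₂] = −20v₋₂`, `[v₀,v₋₄] = −20v₋₄`, `[v₀,v₋₆] = 20v₋₆`,
`[v₋₂,v₋₄] = −60v₋₆`, all other products of basis vectors `v_p, v_q` with `p > q` being zero. -/
def br (x y : M7) : M7 :=
  ![20 * dd x y 0 3 - 60 * dd x y 1 2,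
    10 * dd x y 0 4 - 20 * dd x y 1 3,
    4 * dd x y 0 5 - 20 * dd x y 2 3,
    dd x y 0 6 + 6 * dd x y 1 5 - 15 * dd x y 2 4,
    4 * dd x y 1 6 - 20 * dd x y 3 4,
    10 * dd x y 2 6 - 20 * dd x y 3 5,
    20 * dd x y 3 6 - 60 * dd x y 4 5]

/-- Action of `H` on `M = V(6)`: `H·v_k = k v_k`. -/
def Hm (x : M7) : M7 := ![6 * x 0, 4 * x 1, 2 * x 2, 0, -2 * x 4, -4 * x 5, -6 * x 6]

/-- Action of `E` on `M = V(6)`: `E·v₆ = 0`, `E·v₄ = 6v₆`, `E·v₂ = 5v₄`, `E·v₀ = 4v₂`,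
`E·v₋₂ = 3v₀`, `E·v₋₄ = 2v₋₂`, `E·v₋₆ = v₋₄`. -/
def Em (x : M7) : M7 := ![6 * x 1, 5 * x 2, 4 * x 3, 3 * x 4, 2 * x 5, x 6, 0]

/-- Action of `F` on `M = V(6)`: `F·v₆ = v₄`, `F·v₄ = 2v₂`, `F·v₂ = 3v₀`, `F·v₀ = 4v₋₂`,
`F·v₋₂ = 5v₋₄`, `F·v₋₄ = 6v₋₆`, `F·v₋₆ = 0`. -/
def Fm (x : M7) : M7 := ![0, x 0, 2 * x 1, 3 * x 2, 4 * x 3, 5 * x 4, 6 * x 5]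

/-- Coefficient of `E` in `β(x,y)` (here `u₂ = −E`, so e.g. `β(v₆,v₋₄) = 2u₂ = −2E`). -/
def cE (x y : M7) : ℂ := -2 * dd x y 0 5 + 10 * dd x y 1 4 - 20 * dd x y 2 3

/-- Coefficient of `H` in `β(x,y)` (here `u₀ = H`). -/
def cH (x y : M7) : ℂ := dd x y 0 6 - 4 * dd x y 1 5 + 5 * dd x y 2 4

/-- Coefficient of `F` in `β(x,y)` (here `u₋₂ = F`). -/
def cF (x y : M7) : ℂ := 2 * dd x y 1 6 - 10 * dd x y 2 5 + 20 * dd x y 3 4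

/-- The trilinear operation `(x,y,z) = β(x,y)·z`, where `β(x,y) = cE x y • E + cH x y • H + cF x y • F ∈ sl(2,ℂ)`
acts on `z ∈ M` via the `sl(2,ℂ)`-action `Em, Hm, Fm`. -/
def tri (x y z : M7) : M7 := cE x y • Em z + cH x y • Hm z + cF x y • Fm z

/-- The rescaled trilinear product `⟨x,y,z⟩ = −30·(x,y,z)`. -/
def lyt (x y z : M7) : M7 := (-30 : ℂ) • tri x y z

lemma br_add_left (x y z : M7) : br (x + y) z = br x z + br y z := by
  funext i; fin_cases i <;> simp [br, dd] <;> ring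

lemma br_add_right (x y z : M7) : br x (y + z) = br x y + br x z := by
  funext i; fin_cases i <;> simp [br, dd] <;> ring

lemma br_smul_left (r : ℂ) (x y : M7) : br (r • x) y = r • br x y := by
  funext i; fin_cases i <;> simp [br, dd] <;> ring

lemma br_smul_right (r : ℂ) (x y : M7) : br x (r • y) = r • br x y := by
  funext i; fin_cases i <;> simp [br, dd] <;> ring

lemma lyt_add_left (x y z w : M7) : lyt (x + y) z w = lyt x z w + lyt y z w := by
  funext i; fin_cases i <;> simp [lyt, tri, cE, cH, cF, Em, Hm, Fm, dd] <;> ring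

lemma lyt_smul_left (r : ℂ) (x y z : M7) : lyt (r • x) y z = r • lyt x y z := by
  funext i; fin_cases i <;> simp [lyt, tri, cE, cH, cF, Em, Hm, Fm, dd] <;> ring

lemma Em_add (x y : M7) : Em (x + y) = Em x + Em y := by
  funext i; fin_cases i <;> simp [Em] <;> ring

lemma Em_sub (x y : M7) : Em (x - y) = Em x - Em y := by
  funext i; fin_cases i <;> simp [Em] <;> ring

lemma Em_neg (x : M7) : Em (-x) = -Em x := by
  funext i; fin_cases i <;> simp [Em]

lemma Em_br (x y : M7) : Em (br x y) = br (Em x) y + br x (Em y) := by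
  funext i; fin_cases i <;> simp [Em, br, dd] <;> ring

lemma Em_lyt (x y z : M7) :
    Em (lyt x y z) = lyt (Em x) y z + lyt x (Em y) z + lyt x y (Em z) := by
  funext i; fin_cases i <;> simp [lyt, tri, cE, cH, cF, Em, Hm, Fm, dd] <;> ring

lemma Fm_add (x y : M7) : Fm (x + y) = Fm x + Fm y := by
  funext i; fin_cases i <;> simp [Fm] <;> ring

lemma Fm_sub (x y : M7) : Fm (x - y) = Fm x - Fm y := by
  funext i; fin_cases i <;> simp [Fm] <;> ring

lemma Fm_neg (x : M7) : Fm (-x) = -Fm x := by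
  funext i; fin_cases i <;> simp [Fm]

lemma Fm_br (x y : M7) : Fm (br x y) = br (Fm x) y + br x (Fm y) := by
  funext i; fin_cases i <;> simp [Fm, br, dd] <;> ring

lemma Fm_lyt (x y z : M7) :
    Fm (lyt x y z) = lyt (Fm x) y z + lyt x (Fm y) z + lyt x y (Fm z) := by
  funext i; fin_cases i <;> simp [lyt, tri, cE, cH, cF, Em, Hm, Fm, dd] <;> ring

/-- The left-hand side of the 31-term identity, viewed as a function of its five arguments. -/
def Phi (a b c d e : M7) : M7 :=
      - (br (br (br (br a b) e) d) c) - (br (br (br (br a c) b) d) e)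
         - (br (br (br (br a c) e) d) b) + (br (br (br (br a d) c) b) e)
         + (br (br (br (br a e) d) b) c) + (br (br (br (br a e) d) c) b)
         + (br (br (br (br b c) d) a) e) - (br (br (br (br b d) a) c) e)
         - (br (br (br (br b d) a) e) c) - (br (br (br (br c d) a) e) b)
         - (br (br (br (br d e) b) a) c) - (br (br (br (br d e) c) a) b)
         - (br (br (lyt a c d) b) e) - (br (br (lyt a c d) e) b) - (br (br (lyt a d c) e) b)
         + (br (br (lyt b c d) e) a) - (br (br (lyt b d c) a) e) - (br (br (lyt c e d) a) b)
         - (br (br (lyt d e c) a) b) - (br (br (lyt d e c) b) a)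
         + (br (br (br a b) (br c d)) e) + (br (br (br a d) (br b e)) c)
         + (br (br (br a d) (br c e)) b) + (br (lyt a d c) (br b e))
         - (br (lyt b c d) (br a e)) - (br (lyt b d c) (br a e)) - (br (lyt c e d) (br a b))
         + (lyt (br (br a b) e) c d) + (lyt (br (br a e) b) c d) + (lyt (br (br a e) b) d c)
         + (lyt (br (br b e) a) d c)

lemma Em_Phi (a b c d e : M7) :
    Em (Phi a b c d e) = Phi (Em a) b c d e + Phi a (Em b) c d e + Phi a b (Em c) d e
      + Phi a b c (Em d) e + Phi a b c d (Em e) := by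
  simp only [Phi, Em_add, Em_sub, Em_neg, Em_br, Em_lyt, br_add_left, br_add_right,
    lyt_add_left]
  abel

lemma Fm_Phi (a b c d e : M7) :
    Fm (Phi a b c d e) = Phi (Fm a) b c d e + Phi a (Fm b) c d e + Phi a b (Fm c) d e
      + Phi a b c (Fm d) e + Phi a b c d (Fm e) := by
  simp only [Phi, Fm_add, Fm_sub, Fm_neg, Fm_br, Fm_lyt, br_add_left, br_add_right,
    lyt_add_left]
  abel

lemma Phi_add_first (x y b c d e : M7) :
    Phi (x + y) b c d e = Phi x b c d e + Phi y b c d e := by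
  simp only [Phi, br_add_left, br_add_right, lyt_add_left]
  abel

lemma Phi_smul_first (r : ℂ) (x b c d e : M7) :
    Phi (r • x) b c d e = r • Phi x b c d e := by
  simp only [Phi, br_smul_left, br_smul_right, lyt_smul_left,
    smul_add, smul_sub, smul_neg]

lemma Phi_add_second (a x y c d e : M7) :
    Phi a (x + y) c d e = Phi a x c d e + Phi a y c d e := by
  simp only [Phi, br_add_left, br_add_right, lyt_add_left]
  abel

lemma Phi_smul_second (r : ℂ) (a x c d e : M7) :
    Phi a (r • x) c d e = r • Phi a x c d e := by
  simp only [Phi, br_smul_left, br_smul_right, lyt_smul_left,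
    smul_add, smul_sub, smul_neg]

/-- The highest weight vector `v₆`. -/
def vHigh : M7 := ![1, 0, 0, 0, 0, 0, 0]

/-- The lowest weight vector `v₋₆`. -/
def vLow : M7 := ![0, 0, 0, 0, 0, 0, 1]

/-- `v₆` generates `M` under `F`: a property stable under linear combinations and under `F` that
holds for `v₆` holds on all of `M`. -/
lemma induction_F (P : M7 → Prop) (hadd : ∀ x y, P x → P y → P (x + y))
    (hsmul : ∀ (r : ℂ) x, P x → P (r • x)) (hF : ∀ x, P x → P (Fm x)) (h0 : P vHigh)
    (x : M7) : P x := by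
  have h1 := hF _ h0
  have h2 := hF _ h1
  have h3 := hF _ h2
  have h4 := hF _ h3
  have h5 := hF _ h4
  have h6 := hF _ h5
  -- `Fᵏ v₆ = k! v₆₋₂ₖ`
  have key : x = x 0 • vHigh + x 1 • Fm vHigh + (x 2 / 2) • Fm (Fm vHigh)
      + (x 3 / 6) • Fm (Fm (Fm vHigh)) + (x 4 / 24) • Fm (Fm (Fm (Fm vHigh)))
      + (x 5 / 120) • Fm (Fm (Fm (Fm (Fm vHigh))))
      + (x 6 / 720) • Fm (Fm (Fm (Fm (Fm (Fm vHigh))))) := by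
    funext i; fin_cases i <;> simp [Fm, vHigh] <;> ring
  rw [key]
  exact hadd _ _ (hadd _ _ (hadd _ _ (hadd _ _ (hadd _ _ (hadd _ _ (hsmul _ _ h0)
    (hsmul _ _ h1)) (hsmul _ _ h2)) (hsmul _ _ h3)) (hsmul _ _ h4)) (hsmul _ _ h5)) (hsmul _ _ h6)

/-- `v₋₆` generates `M` under `E`: a property stable under linear combinations and under `E` that
holds for `v₋₆` holds on all of `M`. -/
lemma induction_E (P : M7 → Prop) (hadd : ∀ x y, P x → P y → P (x + y))
    (hsmul : ∀ (r : ℂ) x, P x → P (r • x)) (hE : ∀ x, P x → P (Em x)) (h0 : P vLow)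
    (x : M7) : P x := by
  have h1 := hE _ h0
  have h2 := hE _ h1
  have h3 := hE _ h2
  have h4 := hE _ h3
  have h5 := hE _ h4
  have h6 := hE _ h5
  -- `Eᵏ v₋₆ = k! v₂ₖ₋₆`
  have key : x = x 6 • vLow + x 5 • Em vLow + (x 4 / 2) • Em (Em vLow)
      + (x 3 / 6) • Em (Em (Em vLow)) + (x 2 / 24) • Em (Em (Em (Em vLow)))
      + (x 1 / 120) • Em (Em (Em (Em (Em vLow))))
      + (x 0 / 720) • Em (Em (Em (Em (Em (Em vLow))))) := by
    funext i; fin_cases i <;> simp [Em, vLow] <;> ring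
  rw [key]
  exact hadd _ _ (hadd _ _ (hadd _ _ (hadd _ _ (hadd _ _ (hadd _ _ (hsmul _ _ h0)
    (hsmul _ _ h1)) (hsmul _ _ h2)) (hsmul _ _ h3)) (hsmul _ _ h4)) (hsmul _ _ h5)) (hsmul _ _ h6)

set_option maxHeartbeats 4000000 in
/-- The polynomial identity left over after both reductions. -/
lemma Phi_vHigh_vLow (c d e : M7) : Phi vHigh vLow c d e = 0 := by
  have hcomp : ∀ i, Phi vHigh vLow c d e i = 0 := by
    intro i
    fin_cases i <;>
      simp [Phi, br, lyt, tri, cE, cH, cF, Em, Hm, Fm, dd, vHigh, vLow] <;> ring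
  exact funext hcomp

/-- With `a = v₆` fixed, the identity propagates from `b = v₋₆` by applying `E`, since
`E v₆ = 0`. -/
lemma Phi_vHigh (b c d e : M7) : Phi vHigh b c d e = 0 := by
  have hz : Em vHigh = 0 := by
    funext i; fin_cases i <;> simp [Em, vHigh]
  have h00 (b c d e : M7) : Phi 0 b c d e = 0 := by
    simpa using Phi_smul_first 0 0 b c d e
  have hE0 : Em 0 = 0 := by
    funext i; fin_cases i <;> simp [Em]
  refine induction_E (fun b => ∀ c d e, Phi vHigh b c d e = 0) ?_ ?_ ?_ Phi_vHigh_vLow b c d e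
  · intro x y hx hy c d e
    rw [Phi_add_second, hx, hy, add_zero]
  · intro r x hx c d e
    rw [Phi_smul_second, hx, smul_zero]
  · intro x hx c d e
    have h := Em_Phi vHigh x c d e
    simpa [hx, hz, h00, hE0] using h.symm

/-- The new 31-term identity in degree 5 relating the two operations on `M`. -/
theorem M_satisfies_31_term_identity (a b c d e : M7) :
      - (br (br (br (br a b) e) d) c) - (br (br (br (br a c) b) d) e)
         - (br (br (br (br a c) e) d) b) + (br (br (br (br a d) c) b) e)
         + (br (br (br (br a e) d) b) c) + (br (br (br (br a e) d) c) b)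
         + (br (br (br (br b c) d) a) e) - (br (br (br (br b d) a) c) e)
         - (br (br (br (br b d) a) e) c) - (br (br (br (br c d) a) e) b)
         - (br (br (br (br d e) b) a) c) - (br (br (br (br d e) c) a) b)
         - (br (br (lyt a c d) b) e) - (br (br (lyt a c d) e) b) - (br (br (lyt a d c) e) b)
         + (br (br (lyt b c d) e) a) - (br (br (lyt b d c) a) e) - (br (br (lyt c e d) a) b)
         - (br (br (lyt d e c) a) b) - (br (br (lyt d e c) b) a)
         + (br (br (br a b) (br c d)) e) + (br (br (br a d) (br b e)) c)
         + (br (br (br a d) (br c e)) b) + (br (lyt a d c) (br b e))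
         - (br (lyt b c d) (br a e)) - (br (lyt b d c) (br a e)) - (br (lyt c e d) (br a b))
         + (lyt (br (br a b) e) c d) + (lyt (br (br a e) b) c d) + (lyt (br (br a e) b) d c)
         + (lyt (br (br b e) a) d c)
      = 0 := by
  change Phi a b c d e = 0
  have hF0 : Fm 0 = 0 := by
    funext i; fin_cases i <;> simp [Fm]
  refine induction_F (fun a => ∀ b c d e, Phi a b c d e = 0) ?_ ?_ ?_ Phi_vHigh a b c d e
  · intro x y hx hy b c d e
    rw [Phi_add_first, hx, hy, add_zero]
  · intro r x hx b c d e
    rw [Phi_smul_first, hx, smul_zero]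
  · intro x hx b c d e
    have h := Fm_Phi x b c d e
    simpa [hx, hF0] using h.symm

end
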